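/- arXiv:0907.4906 — 5 statements merged into one kernel-verified Lean document; each statement's English description precedes it below -/
import Mathlib

section
/- Let G be a finite simple 2-connected graph with at least 4 vertices in which every vertex has degree at least 3. Then there exists a vertex v of G such that the induced subgraph of G on V(G) \ {v} is 2-connected. -/
/-- A graph is 2-connected if it is connected and remains connected after
deleting any single vertex (together with its incident edges). -/
def TwoConnected {V : Type*} (G : SimpleGraph V) : Prop :=
  G.Connected ∧ ∀ v : V, (G.induce ({v}ᶜ : Set V)).Connected

/-!
Write `N[X]` for the closed neighbourhood of a vertex set `X` and call `X` a `k`-fragment if it is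
nonempty, `N[X]` is not everything and `N[X]` has at most `k` vertices outside `X`. If deleting any
vertex of a `k`-connected graph destroys `k`-connectedness, every vertex `w` lies on the boundary
`N[F] \ F` of a `k`-fragment `F`. Apply this to a vertex `w` of a smallest `k`-fragment `A`.

By submodularity of `X ↦ |N[X]|`, the set `A` is contained in every `k`-fragment that it meets
(Mader). As `w` lies neither in `F` nor in the opposite fragment `F' = N[F]ᶜ`, the whole of `A` lies
on the boundary of `F`. Then each of `F` and `F'` contains at least `|A|` of the at most `k`
boundary vertices of `A`, so `2 |A| ≤ k`. The neighbours of `w` lie in `N[A] \ {w}`, so there are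
fewer than `3 k / 2` of them, which for `k = 2` means at most two.
-/

/-- The closed neighbourhood `N[X]` of a vertex set `X`. Its boundary, the set of vertices outside
`X` with a neighbour in `X`, is `N[X] \ X`. -/
def closedNeighborSet {V : Type*} (G : SimpleGraph V) (X : Set V) : Set V :=
  X ∪ ⋃ x ∈ X, G.neighborSet x

/-- `k`-connectedness of a finite graph, in terms of separators: every nonempty `X` with a vertex
outside `N[X]` has at least `k` boundary vertices. There is no lower bound on the number of
vertices, so complete graphs are `k`-connected for every `k`. -/
def IsVertexConnected {V : Type*} (G : SimpleGraph V) (k : ℕ) : Prop :=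
  ∀ X : Set V, X.Nonempty → closedNeighborSet G X ≠ Set.univ →
    X.ncard + k ≤ (closedNeighborSet G X).ncard

/-- A `k`-fragment of a finite graph: a nonempty set of vertices separated from a nonempty rest of
the graph by its boundary, which has at most `k` vertices. -/
structure IsFragment {V : Type*} (G : SimpleGraph V) (k : ℕ) (X : Set V) : Prop where
  nonempty : X.Nonempty
  closedNeighborSet_ne_univ : closedNeighborSet G X ≠ Set.univ
  ncard_closedNeighborSet_le : (closedNeighborSet G X).ncard ≤ X.ncard + k

/-- An atom in the sense of Mader: a `k`-fragment with the least number of vertices. -/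
def IsAtomicFragment {V : Type*} (G : SimpleGraph V) (k : ℕ) (A : Set V) : Prop :=
  MinimalFor (IsFragment G k) Set.ncard A

section

variable {V : Type*} {G : SimpleGraph V} {k : ℕ} {A F X Y : Set V} {v w x y : V}

section ClosedNeighborSet

theorem mem_closedNeighborSet :
    y ∈ closedNeighborSet G X ↔ y ∈ X ∨ ∃ x ∈ X, G.Adj x y := by
  simp [closedNeighborSet]

theorem subset_closedNeighborSet : X ⊆ closedNeighborSet G X :=
  Set.subset_union_left

theorem neighborSet_subset_closedNeighborSet (hx : x ∈ X) :
    G.neighborSet x ⊆ closedNeighborSet G X :=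
  fun _ hy => mem_closedNeighborSet.2 (.inr ⟨x, hx, hy⟩)

theorem closedNeighborSet_mono (h : X ⊆ Y) : closedNeighborSet G X ⊆ closedNeighborSet G Y :=
  Set.union_subset_union h (Set.biUnion_subset_biUnion_left h)

theorem closedNeighborSet_union :
    closedNeighborSet G (X ∪ Y) = closedNeighborSet G X ∪ closedNeighborSet G Y := by
  rw [closedNeighborSet, closedNeighborSet, closedNeighborSet, Set.biUnion_union,
    Set.union_union_union_comm]

theorem closedNeighborSet_compl_closedNeighborSet_subset :
    closedNeighborSet G (closedNeighborSet G X)ᶜ ⊆ Xᶜ := by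
  intro y hy hyX
  rcases mem_closedNeighborSet.1 hy with hy | ⟨x, hx, hxy⟩
  · exact hy (subset_closedNeighborSet hyX)
  · exact hx (neighborSet_subset_closedNeighborSet hyX hxy.symm)

theorem ncard_closedNeighborSet_inter_add_union_le [Finite V] (G : SimpleGraph V) (X Y : Set V) :
    (closedNeighborSet G (X ∩ Y)).ncard + (closedNeighborSet G (X ∪ Y)).ncard ≤
      (closedNeighborSet G X).ncard + (closedNeighborSet G Y).ncard := by
  have hinter : closedNeighborSet G (X ∩ Y) ⊆ closedNeighborSet G X ∩ closedNeighborSet G Y :=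
    Set.subset_inter (closedNeighborSet_mono Set.inter_subset_left)
      (closedNeighborSet_mono Set.inter_subset_right)
  rw [closedNeighborSet_union, ← Set.ncard_inter_add_ncard_union (closedNeighborSet G X)]
  gcongr
  exact Set.toFinite _

theorem closedNeighborSet_image_val_subset (X : Set ({v}ᶜ : Set V)) :
    closedNeighborSet G (Subtype.val '' X) ⊆
      insert v (Subtype.val '' closedNeighborSet (G.induce {v}ᶜ) X) := by
  intro y hy
  by_cases hyv : y = v
  · exact .inl hyv
  refine .inr ⟨⟨y, hyv⟩, mem_closedNeighborSet.2 ?_, rfl⟩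
  rcases mem_closedNeighborSet.1 hy with ⟨x, hx, rfl⟩ | ⟨_, ⟨x, hx, rfl⟩, hxy⟩
  · exact .inl hx
  · exact .inr ⟨x, hx, hxy⟩

theorem ncard_closedNeighborSet_image_val_le [Finite V] (G : SimpleGraph V)
    (X : Set ({v}ᶜ : Set V)) :
    (closedNeighborSet G (Subtype.val '' X)).ncard ≤
      (closedNeighborSet (G.induce {v}ᶜ) X).ncard + 1 := by
  rw [← Set.ncard_image_of_injective (closedNeighborSet _ X) Subtype.val_injective]
  exact (Set.ncard_le_ncard (closedNeighborSet_image_val_subset X)).trans (Set.ncard_insert_le ..)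

theorem closedNeighborSet_image_val_ne_univ {X : Set ({v}ᶜ : Set V)}
    (hX : closedNeighborSet (G.induce {v}ᶜ) X ≠ Set.univ) :
    closedNeighborSet G (Subtype.val '' X) ≠ Set.univ := by
  obtain ⟨y, hy⟩ := (Set.ne_univ_iff_exists_notMem _).1 hX
  refine (Set.ne_univ_iff_exists_notMem _).2 ⟨y, fun hyN => ?_⟩
  rcases closedNeighborSet_image_val_subset X hyN with hyv | ⟨z, hz, hzy⟩
  · exact y.2 hyv
  · exact hy (Subtype.val_injective hzy ▸ hz)

theorem image_val_closedNeighborSet_preimage_subset :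
    Subtype.val '' closedNeighborSet (G.induce {v}ᶜ) (Subtype.val ⁻¹' X) ⊆
      closedNeighborSet G X \ {v} := by
  rintro _ ⟨y, hy, rfl⟩
  refine ⟨mem_closedNeighborSet.2 ?_, y.2⟩
  exact (mem_closedNeighborSet.1 hy).imp id fun ⟨x, hx, hxy⟩ => ⟨x, hx, hxy⟩

end ClosedNeighborSet

section VertexConnected

theorem preconnected_iff_closedNeighborSet_subset :
    G.Preconnected ↔ ∀ X : Set V, X.Nonempty → closedNeighborSet G X ⊆ X → X = Set.univ := by
  constructor
  · rintro hG X ⟨x, hx⟩ hX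
    by_contra! hne
    obtain ⟨y, hy⟩ := (Set.ne_univ_iff_exists_notMem X).1 hne
    obtain ⟨p⟩ := hG x y
    obtain ⟨d, -, hfst, hsnd⟩ := p.exists_boundary_dart X hx hy
    exact hsnd (hX (neighborSet_subset_closedNeighborSet hfst d.adj))
  · intro h x y
    have huniv : {z | G.Reachable x z} = Set.univ := by
      refine h _ ⟨x, .rfl⟩ fun z hz => ?_
      rcases mem_closedNeighborSet.1 hz with hz | ⟨u, hu, huz⟩
      · exact hz
      · exact SimpleGraph.Reachable.trans hu huz.reachable
    exact Set.eq_univ_iff_forall.1 huniv y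

theorem IsVertexConnected.mono {m : ℕ} (hG : IsVertexConnected G k) (hmk : m ≤ k) :
    IsVertexConnected G m :=
  fun X hX hne => (Nat.add_le_add_left hmk _).trans (hG X hX hne)

variable [Finite V]

theorem isVertexConnected_one_iff : IsVertexConnected G 1 ↔ G.Preconnected := by
  rw [preconnected_iff_closedNeighborSet_subset]
  constructor
  · intro hG X hX hsub
    by_contra hne
    have heq : closedNeighborSet G X = X := hsub.antisymm subset_closedNeighborSet
    have hcard := hG X hX (by rwa [heq])
    rw [heq] at hcard
    omega
  · intro hG X hX hne
    refine Set.ncard_lt_ncard (subset_closedNeighborSet.ssubset_of_not_subset fun hsub => hne ?_)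
    rw [hsub.antisymm subset_closedNeighborSet, hG X hX hsub]

theorem IsVertexConnected.induce_compl_singleton (hG : IsVertexConnected G (k + 1)) (v : V) :
    IsVertexConnected (G.induce {v}ᶜ) k := by
  intro X hX hne
  have hlift := hG _ (hX.image _) (closedNeighborSet_image_val_ne_univ hne)
  have hle := ncard_closedNeighborSet_image_val_le G X
  rw [Set.ncard_image_of_injective _ Subtype.val_injective] at hlift
  omega

theorem IsVertexConnected.succ_of_forall_induce (hG : IsVertexConnected G k) (hk : k ≠ 0)
    (hdel : ∀ v, IsVertexConnected (G.induce {v}ᶜ) k) : IsVertexConnected G (k + 1) := by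
  intro X hX hne
  have hlt : X.ncard < (closedNeighborSet G X).ncard := by
    have := hG X hX hne
    omega
  obtain ⟨v, hv, hvX⟩ := Set.exists_mem_notMem_of_ncard_lt_ncard hlt
  have himage : Subtype.val '' (Subtype.val ⁻¹' X : Set ({v}ᶜ : Set V)) = X := by
    rw [Subtype.image_preimage_coe, Set.inter_eq_right]
    exact Set.subset_compl_singleton_iff.2 hvX
  have hsub := image_val_closedNeighborSet_preimage_subset (G := G) (v := v) (X := X)
  have hne' : closedNeighborSet (G.induce {v}ᶜ) (Subtype.val ⁻¹' X) ≠ Set.univ := by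
    intro huniv
    rw [huniv, Set.image_univ, Subtype.range_coe] at hsub
    refine hne (Set.eq_univ_of_forall fun y => ?_)
    by_cases hy : y = v
    · rwa [hy]
    · exact (hsub hy).1
  have hX' : (Subtype.val ⁻¹' X : Set ({v}ᶜ : Set V)).Nonempty :=
    Set.image_nonempty.1 (himage.symm ▸ hX)
  have hcard := hdel v _ hX' hne'
  have hle := Set.ncard_le_ncard hsub
  have hremove := Set.ncard_sdiff_singleton_add_one hv
  rw [← Set.ncard_image_of_injective _ Subtype.val_injective, himage,
    ← Set.ncard_image_of_injective _ Subtype.val_injective] at hcard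
  omega

theorem isVertexConnected_add_one_iff (hk : k ≠ 0) :
    IsVertexConnected G (k + 1) ↔
      IsVertexConnected G k ∧ ∀ v, IsVertexConnected (G.induce {v}ᶜ) k :=
  ⟨fun hG => ⟨hG.mono k.le_succ, hG.induce_compl_singleton⟩,
    fun ⟨hG, hdel⟩ => hG.succ_of_forall_induce hk hdel⟩

theorem twoConnected_iff_isVertexConnected [Nontrivial V] :
    TwoConnected G ↔ IsVertexConnected G 2 := by
  have hne (v : V) : Nonempty ({v}ᶜ : Set V) := (Set.nonempty_compl_of_nontrivial v).to_subtype
  simp [TwoConnected, isVertexConnected_add_one_iff one_ne_zero, isVertexConnected_one_iff,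
    SimpleGraph.connected_iff, hne, Nontrivial.to_nonempty]

end VertexConnected

section Fragment

variable [Finite V]

theorem IsFragment.compl_closedNeighborSet (hF : IsFragment G k F) :
    IsFragment G k (closedNeighborSet G F)ᶜ where
  nonempty := Set.nonempty_compl.2 hF.closedNeighborSet_ne_univ
  closedNeighborSet_ne_univ huniv := by
    obtain ⟨x, hx⟩ := hF.nonempty
    exact closedNeighborSet_compl_closedNeighborSet_subset (huniv ▸ Set.mem_univ x) hx
  ncard_closedNeighborSet_le := by
    have hle : (closedNeighborSet G (closedNeighborSet G F)ᶜ).ncard ≤ Fᶜ.ncard :=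
      Set.ncard_le_ncard closedNeighborSet_compl_closedNeighborSet_subset
    have hF_card := hF.ncard_closedNeighborSet_le
    have hF_compl := Set.ncard_add_ncard_compl F
    have hN_compl := Set.ncard_add_ncard_compl (closedNeighborSet G F)
    omega

theorem IsFragment.closedNeighborSet_compl_closedNeighborSet (hF : IsFragment G k F)
    (hG : IsVertexConnected G k) : closedNeighborSet G (closedNeighborSet G F)ᶜ = Fᶜ := by
  have hF' := hF.compl_closedNeighborSet
  refine Set.eq_of_subset_of_ncard_le closedNeighborSet_compl_closedNeighborSet_subset ?_
  have hbound := hG _ hF'.nonempty hF'.closedNeighborSet_ne_univ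
  have hF_card := hF.ncard_closedNeighborSet_le
  have hF_compl := Set.ncard_add_ncard_compl F
  have hN_compl := Set.ncard_add_ncard_compl (closedNeighborSet G F)
  omega

theorem IsFragment.ncard_neighborSet_lt (hF : IsFragment G k F) (hx : x ∈ F) :
    (G.neighborSet x).ncard < F.ncard + k := by
  refine (Set.ncard_lt_ncard ?_).trans_le hF.ncard_closedNeighborSet_le
  refine (Set.ssubset_iff_of_subset (neighborSet_subset_closedNeighborSet hx)).2 ?_
  exact ⟨x, subset_closedNeighborSet hx, G.irrefl⟩

theorem IsVertexConnected.exists_isFragment_boundary (hG : IsVertexConnected G k)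
    (hv : ¬ IsVertexConnected (G.induce {v}ᶜ) k) :
    ∃ F, IsFragment G k F ∧ v ∈ closedNeighborSet G F \ F := by
  simp only [IsVertexConnected, not_forall, not_le] at hv
  obtain ⟨X, hX, hne, hlt⟩ := hv
  have hcard := Set.ncard_image_of_injective X Subtype.val_injective
  have hne' := closedNeighborSet_image_val_ne_univ hne
  refine ⟨Subtype.val '' X, ⟨hX.image _, hne', ?_⟩, ?_, fun ⟨x, _, hxv⟩ => x.2 hxv⟩
  · have hle := ncard_closedNeighborSet_image_val_le G X
    omega
  · by_contra hvN
    have hle := Set.ncard_le_ncard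
      ((Set.subset_insert_iff_of_notMem hvN).1 (closedNeighborSet_image_val_subset X))
    rw [Set.ncard_image_of_injective _ Subtype.val_injective] at hle
    have hbound := hG _ (hX.image _) hne'
    omega

end Fragment

namespace IsAtomicFragment

theorem ncard_le (hA : IsAtomicFragment G k A) (hF : IsFragment G k F) : A.ncard ≤ F.ncard :=
  (le_total A.ncard F.ncard).elim id (hA.2 hF)

variable [Finite V]

theorem subset_of_inter_nonempty (hA : IsAtomicFragment G k A) (hG : IsVertexConnected G k)
    (hF : IsFragment G k F) (hAF : (A ∩ F).Nonempty) : A ⊆ F := by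
  by_contra hsub
  have hinter : (A ∩ F).ncard + k < (closedNeighborSet G (A ∩ F)).ncard := by
    by_contra! hle
    have hne : closedNeighborSet G (A ∩ F) ≠ Set.univ := fun huniv =>
      hA.1.closedNeighborSet_ne_univ
        (Set.eq_univ_of_subset (closedNeighborSet_mono Set.inter_subset_left) huniv)
    have hlt : (A ∩ F).ncard < A.ncard := Set.ncard_lt_ncard (Set.inter_ssubset_left_iff.2 hsub)
    exact hlt.not_ge (hA.ncard_le ⟨hAF, hne, hle⟩)
  have hunion : (closedNeighborSet G (A ∪ F)).ncard < (A ∪ F).ncard + k := by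
    have hsubmod := ncard_closedNeighborSet_inter_add_union_le G A F
    have hmod := Set.ncard_inter_add_ncard_union A F
    have hA_card := hA.1.ncard_closedNeighborSet_le
    have hF_card := hF.ncard_closedNeighborSet_le
    omega
  have huniv : closedNeighborSet G (A ∪ F) = Set.univ := by
    by_contra hne
    exact hunion.not_ge (hG _ (hAF.mono (Set.inter_subset_left.trans Set.subset_union_left)) hne)
  have hupper : Nat.card V < A.ncard + F.ncard + k := by
    rw [huniv, Set.ncard_univ] at hunion
    exact hunion.trans_le (Nat.add_le_add_right (Set.ncard_union_le A F) k)
  -- The fragment opposite to `F` has at least `|A|` vertices as well.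
  have hlower : A.ncard + F.ncard + k ≤ Nat.card V := by
    have hcompl := hA.ncard_le hF.compl_closedNeighborSet
    have hF_card := hG F hF.nonempty hF.closedNeighborSet_ne_univ
    have hpartition := Set.ncard_add_ncard_compl (closedNeighborSet G F)
    omega
  exact hupper.not_ge hlower

theorem subset_boundary (hA : IsAtomicFragment G k A) (hG : IsVertexConnected G k)
    (hF : IsFragment G k F) (hw : w ∈ A) (hwF : w ∈ closedNeighborSet G F \ F) :
    A ⊆ closedNeighborSet G F \ F := by
  refine fun y hy => ⟨?_, fun hyF => ?_⟩
  · by_contra hyN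
    exact hA.subset_of_inter_nonempty hG hF.compl_closedNeighborSet ⟨y, hy, hyN⟩ hw hwF.1
  · exact hwF.2 (hA.subset_of_inter_nonempty hG hF ⟨y, hy, hyF⟩ hw)

theorem ncard_le_ncard_inter_closedNeighborSet (hA : IsAtomicFragment G k A)
    (hG : IsVertexConnected G k) (hF : IsFragment G k F) (hAF : A ⊆ closedNeighborSet G F) :
    A.ncard ≤ (F ∩ closedNeighborSet G A).ncard := by
  rcases (F \ closedNeighborSet G A).eq_empty_or_nonempty with hempty | hnonempty
  · rw [Set.inter_eq_left.2 (Set.sdiff_eq_empty.1 hempty)]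
    exact hA.ncard_le hF
  · have hsub : closedNeighborSet G (F \ closedNeighborSet G A) ⊆ closedNeighborSet G F \ A :=
      Set.subset_inter (closedNeighborSet_mono Set.sdiff_subset)
        ((closedNeighborSet_mono fun _ hy => hy.2).trans
          closedNeighborSet_compl_closedNeighborSet_subset)
    have hne : closedNeighborSet G (F \ closedNeighborSet G A) ≠ Set.univ := by
      obtain ⟨a, ha⟩ := hA.1.nonempty
      exact fun huniv => (hsub (huniv ▸ Set.mem_univ a)).2 ha
    have hbound := (hG _ hnonempty hne).trans (Set.ncard_le_ncard hsub)
    have hN_card := Set.ncard_sdiff_add_ncard_of_subset hAF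
    have hF_split := Set.ncard_inter_add_ncard_sdiff_eq_ncard F (closedNeighborSet G A)
    have hF_card := hF.ncard_closedNeighborSet_le
    omega

theorem two_mul_ncard_le (hA : IsAtomicFragment G k A) (hG : IsVertexConnected G k)
    (hF : IsFragment G k F) (hAF : A ⊆ closedNeighborSet G F \ F) : 2 * A.ncard ≤ k := by
  let N := closedNeighborSet G A
  let F' := (closedNeighborSet G F)ᶜ
  have hle : A.ncard ≤ (F ∩ N).ncard :=
    hA.ncard_le_ncard_inter_closedNeighborSet hG hF fun _ hy => (hAF hy).1
  have hle' : A.ncard ≤ (F' ∩ N).ncard := by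
    refine hA.ncard_le_ncard_inter_closedNeighborSet hG hF.compl_closedNeighborSet ?_
    rw [hF.closedNeighborSet_compl_closedNeighborSet hG]
    exact fun _ hy => (hAF hy).2
  have hdisj : Disjoint (F ∩ N) (F' ∩ N) :=
    (Set.disjoint_compl_right_iff_subset.2 subset_closedNeighborSet).mono
      Set.inter_subset_left Set.inter_subset_left
  have hsub : F ∩ N ∪ F' ∩ N ⊆ N \ A := by
    rintro y (⟨hyF, hyN⟩ | ⟨hyF, hyN⟩)
    · exact ⟨hyN, fun hyA => (hAF hyA).2 hyF⟩
    · exact ⟨hyN, fun hyA => hyF (hAF hyA).1⟩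
  have hsum := Set.ncard_le_ncard hsub
  rw [Set.ncard_union_eq hdisj] at hsum
  have hN_split : (N \ A).ncard + A.ncard = N.ncard :=
    Set.ncard_sdiff_add_ncard_of_subset subset_closedNeighborSet
  have hN_card : N.ncard ≤ A.ncard + k := hA.1.ncard_closedNeighborSet_le
  omega

end IsAtomicFragment

/-- A theorem of Chartrand, Kaugars and Lick. -/
theorem exists_subtractable_vertex_general [Finite V] [Nonempty V]
    (hG : IsVertexConnected G k) (hdeg : ∀ w, 3 * k ≤ 2 * (G.neighborSet w).ncard + 1) :
    ∃ v, IsVertexConnected (G.induce {v}ᶜ) k := by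
  by_contra! hcrit
  have hfrag (v : V) := hG.exists_isFragment_boundary (hcrit v)
  obtain ⟨A, hA⟩ : ∃ A, IsAtomicFragment G k A :=
    exists_minimalFor_of_wellFoundedLT _ _ ((hfrag (Classical.arbitrary V)).imp fun _ => And.left)
  obtain ⟨w, hw⟩ := hA.1.nonempty
  obtain ⟨F, hF, hwF⟩ := hfrag w
  have hA_card : 2 * A.ncard ≤ k := hA.two_mul_ncard_le hG hF (hA.subset_boundary hG hF hw hwF)
  have hw_deg := hA.1.ncard_neighborSet_lt hw
  have hw_deg' := hdeg w
  omega

end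

/-- If `G` is a finite simple 2-connected graph on at least 4 vertices in
which every vertex has degree at least 3, then some vertex `v` can be
subtracted so that the induced subgraph on `V(G) \ {v}` is 2-connected. -/
theorem exists_subtractable_vertex {V : Type*} [Fintype V]
    (G : SimpleGraph V)
    (hcard : 4 ≤ Fintype.card V) (hG : TwoConnected G)
    (hdeg : ∀ w : V, 3 ≤ (G.neighborSet w).ncard) :
    ∃ v : V, TwoConnected (G.induce ({v}ᶜ : Set V)) := by
  have : Nontrivial V := Fintype.one_lt_card_iff_nontrivial.1 (by omega)
  obtain ⟨v, hv⟩ := exists_subtractable_vertex_general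
    (twoConnected_iff_isVertexConnected.1 hG) fun w => by have := hdeg w; omega
  have : Nontrivial ({v}ᶜ : Set V) := by
    rw [Set.nontrivial_coe_sort, ← Set.one_lt_ncard_iff_nontrivial, Set.ncard_compl,
      Set.ncard_singleton, Nat.card_eq_fintype_card]
    omega
  exact ⟨v, twoConnected_iff_isVertexConnected.2 hv⟩
end

section
/- Let G be a finite simple 2-connected graph with at least 4 vertices. Then either there exists a vertex v of G such that the induced subgraph of G on V(G) \ {v} is 2-connected, or G has at least four vertices of degree exactly 2. -/
/-- `{x, y}` is a separating pair of `G`, and `A`, `B` partition the other vertices into two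
nonempty sides with no edge between them. A side may consist of several components of
`G - {x, y}`. -/
structure IsTwoSeparation {V : Type*} (G : SimpleGraph V) (x y : V) (A B : Set V) : Prop where
  ne : x ≠ y
  nonempty_left : A.Nonempty
  nonempty_right : B.Nonempty
  disjoint : Disjoint A B
  union_eq : A ∪ B = {x, y}ᶜ
  not_adj : ∀ a ∈ A, ∀ b ∈ B, ¬ G.Adj a b

/-- A fragment is a side of a separating pair. -/
def IsFragment_s7 {V : Type*} (G : SimpleGraph V) (F : Set V) : Prop :=
  ∃ x y B, IsTwoSeparation G x y F B

/-- A critically 2-connected graph: no vertex can be subtracted, which for at least three vertices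
means that every vertex belongs to a separating pair. -/
structure CriticallyTwoConnected {V : Type*} (G : SimpleGraph V) : Prop where
  twoConnected : TwoConnected G
  exists_isTwoSeparation : ∀ v, ∃ w A B, IsTwoSeparation G v w A B

/-- The vertices of degree 2. -/
def degreeTwoSet {V : Type*} (G : SimpleGraph V) : Set V :=
  {v | (G.neighborSet v).ncard = 2}

section

variable {V : Type*} {G : SimpleGraph V}

lemma preconnected_induce_iff_exists_adj {s : Set V} :
    (G.induce s).Preconnected ↔
      ∀ A, (s ∩ A).Nonempty → (s \ A).Nonempty → ∃ a ∈ s ∩ A, ∃ b ∈ s \ A, G.Adj a b := by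
  constructor
  · rintro h A ⟨a, has, haA⟩ ⟨b, hbs, hbA⟩
    obtain ⟨p⟩ := h ⟨a, has⟩ ⟨b, hbs⟩
    obtain ⟨d, -, hd, hd'⟩ := p.exists_boundary_dart (Subtype.val ⁻¹' A) haA hbA
    exact ⟨_, ⟨d.fst.2, hd⟩, _, ⟨d.snd.2, hd'⟩, d.adj⟩
  · intro h u v
    by_contra huv
    obtain ⟨_, ⟨has, ⟨a, hua, rfl⟩⟩, b, ⟨hbs, hb⟩, hab⟩ :=
      h (Subtype.val '' {z | (G.induce s).Reachable u z}) ⟨u, u.2, u, .rfl, rfl⟩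
        ⟨v, v.2, by rintro ⟨z, hz, hzv⟩; exact huv (Subtype.ext hzv ▸ hz)⟩
    have hadj : (G.induce s).Adj a ⟨b, hbs⟩ := hab
    exact hb ⟨⟨b, hbs⟩, hua.trans hadj.reachable, rfl⟩

lemma connected_induce_induce_iff {s : Set V} {t : Set s} :
    ((G.induce s).induce t).Connected ↔ (G.induce (Subtype.val '' t)).Connected := by
  let f : (G.induce s).induce t ↪g G :=
    (SimpleGraph.Embedding.induce s).comp (SimpleGraph.Embedding.induce t)
  have hf : Set.range f = Subtype.val '' t := by
    change Set.range (Subtype.val ∘ Subtype.val) = _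
    rw [Set.range_comp, Subtype.range_coe]
  rw [← hf]
  exact f.isoInduceRange.connected_iff

namespace IsTwoSeparation

variable {x y : V} {A B : Set V}

lemma swap_pair (h : IsTwoSeparation G x y A B) : IsTwoSeparation G y x A B where
  __ := h
  ne := h.ne.symm
  union_eq := Set.pair_comm x y ▸ h.union_eq

lemma swap_sides (h : IsTwoSeparation G x y A B) : IsTwoSeparation G x y B A where
  ne := h.ne
  nonempty_left := h.nonempty_right
  nonempty_right := h.nonempty_left
  disjoint := h.disjoint.symm
  union_eq := Set.union_comm A B ▸ h.union_eq
  not_adj b hb a ha hab := h.not_adj a ha b hb hab.symm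

lemma mem_right_iff (h : IsTwoSeparation G x y A B) {z : V} :
    z ∈ B ↔ z ∉ A ∧ z ≠ x ∧ z ≠ y := by
  have hz := Set.ext_iff.mp h.union_eq z
  have hd : z ∈ A → z ∉ B := fun hA => Set.disjoint_left.mp h.disjoint hA
  simp only [Set.mem_union, Set.mem_compl_iff, Set.mem_insert_iff, Set.mem_singleton_iff] at hz
  tauto

lemma mem_left_iff (h : IsTwoSeparation G x y A B) {z : V} :
    z ∈ A ↔ z ∉ B ∧ z ≠ x ∧ z ≠ y :=
  h.swap_sides.mem_right_iff

end IsTwoSeparation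

lemma isFragment_of_forall_adj {F : Set V} {x y : V} (hxy : x ≠ y) (hF : F.Nonempty)
    (hx : x ∉ F) (hy : y ∉ F) (hout : ∃ z ∉ F, z ≠ x ∧ z ≠ y)
    (hadj : ∀ a ∈ F, ∀ b, G.Adj a b → b ∈ F ∨ b = x ∨ b = y) : IsFragment_s7 G F := by
  refine ⟨x, y, {z | z ∉ F ∧ z ≠ x ∧ z ≠ y}, hxy, hF, hout, ?_, ?_, ?_⟩
  · exact Set.disjoint_left.mpr fun z hz hz' => hz'.1 hz
  · grind
  · rintro a ha b ⟨hb, hbx, hby⟩ hab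
    grind

lemma IsFragment_s7.exists_minimal_subset {F : Set V} (hF : IsFragment_s7 G F) (hfin : F.Finite) :
    ∃ E ⊆ F, Minimal (IsFragment_s7 G) E := by
  have hsub : {E | E ⊆ F ∧ IsFragment_s7 G E}.Finite := hfin.finite_subsets.subset fun _ hE => hE.1
  obtain ⟨E, hEF, hE⟩ := hsub.isPWO.exists_le_minimal ⟨subset_rfl, hF⟩
  exact ⟨E, hEF, hE.prop.2, fun _ hD hDE => hE.le_of_le ⟨hDE.trans hEF, hD⟩ hDE⟩

lemma exists_isTwoSeparation_of_not_connected_induce {x y : V} (hxy : x ≠ y)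
    (hne : ({x, y}ᶜ : Set V).Nonempty) (h : ¬ (G.induce ({x, y}ᶜ : Set V)).Connected) :
    ∃ A B, IsTwoSeparation G x y A B := by
  have hpre : ¬ (G.induce ({x, y}ᶜ : Set V)).Preconnected := fun hpre =>
    h ((SimpleGraph.connected_iff _).mpr ⟨hpre, hne.to_subtype⟩)
  rw [preconnected_induce_iff_exists_adj] at hpre
  push Not at hpre
  obtain ⟨A, hA, hA', hadj⟩ := hpre
  exact ⟨_, _, hxy, hA, hA', Set.disjoint_sdiff_inter.symm, Set.inter_union_sdiff _ A, hadj⟩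

namespace TwoConnected

lemma exists_adj_notMem (hG : TwoConnected G) {S : Set V} {t z : V} (hS : S.Nonempty)
    (ht : t ∉ S) (hz : z ∉ S) (hzt : z ≠ t) : ∃ a ∈ S, ∃ b ∉ S, b ≠ t ∧ G.Adj a b := by
  obtain ⟨a, ⟨-, ha⟩, b, ⟨hbt, hb⟩, hab⟩ :=
    preconnected_induce_iff_exists_adj.mp (hG.2 t).preconnected S
      (hS.imp fun a ha => ⟨fun h => ht (h ▸ ha), ha⟩) ⟨z, hzt, hz⟩
  exact ⟨a, ha, b, hb, hbt, hab⟩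

lemma criticallyTwoConnected (hG : TwoConnected G) (hcard : 3 ≤ ENat.card V)
    (h : ∀ v : V, ¬ TwoConnected (G.induce ({v}ᶜ : Set V))) : CriticallyTwoConnected G := by
  refine ⟨hG, fun v => ?_⟩
  obtain ⟨⟨w, hwv⟩, hw⟩ := not_forall.mp fun hcon => h v ⟨hG.2 v, hcon⟩
  have hpair : Subtype.val '' ({⟨w, hwv⟩}ᶜ : Set ({v}ᶜ : Set V)) = {v, w}ᶜ := by
    ext z; simp
  rw [connected_induce_induce_iff, hpair] at hw
  obtain ⟨z, hzv, hzw⟩ := ENat.exists_ne_ne_of_three_le hcard v w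
  exact ⟨w, exists_isTwoSeparation_of_not_connected_induce (Ne.symm hwv) ⟨z, by simp [*]⟩ hw⟩

end TwoConnected

namespace IsTwoSeparation

variable {x y v w : V} {A B H K : Set V}

lemma exists_adj_left (hG : TwoConnected G) (h : IsTwoSeparation G x y A B) :
    ∃ a ∈ A, G.Adj x a := by
  obtain ⟨a, ha, b, hb, hby, hab⟩ := hG.exists_adj_notMem (t := y) (z := x) h.nonempty_left
    (by simp [h.mem_left_iff]) (by simp [h.mem_left_iff]) h.ne
  have hbx : b = x := by grind [h.mem_right_iff, h.not_adj a ha b]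
  exact ⟨a, ha, hbx ▸ hab.symm⟩

lemma neighborSet_eq_of_left_singleton (hG : TwoConnected G)
    (h : IsTwoSeparation G x y {v} B) : G.neighborSet v = {x, y} := by
  have hx : G.Adj x v := by simpa using h.exists_adj_left hG
  have hy : G.Adj y v := by simpa using h.swap_pair.exists_adj_left hG
  refine Set.Subset.antisymm (fun z hz => ?_) (Set.pair_subset hx.symm hy.symm)
  have hzB : z ∉ B := fun hzB => h.not_adj v rfl z hzB hz
  have := G.ne_of_adj hz
  grind [h.mem_right_iff]

lemma mem_degreeTwoSet_of_left_singleton (hG : TwoConnected G)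
    (h : IsTwoSeparation G x y {v} B) : v ∈ degreeTwoSet G := by
  rw [degreeTwoSet, Set.mem_ofPred_eq, h.neighborSet_eq_of_left_singleton hG, Set.ncard_pair h.ne]

lemma mem_degreeTwoSet_of_singleton_sides (hG : TwoConnected G) {p q : V}
    (h : IsTwoSeparation G x y {p} {q}) (hx : x ∈ degreeTwoSet G) : y ∈ degreeTwoSet G := by
  have hp : G.Adj x p := by simpa using h.exists_adj_left hG
  have hq : G.Adj x q := by simpa using h.swap_sides.exists_adj_left hG
  have hpq : p ≠ q := by simpa using h.disjoint
  have hsides : ({p, q} : Set V) = {x, y}ᶜ := Set.singleton_union ▸ h.union_eq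
  have hN : {p, q} = G.neighborSet x :=
    Set.eq_of_subset_of_ncard_le (Set.pair_subset hp hq) (by rw [Set.ncard_pair hpq]; exact hx.le)
      (Set.finite_of_ncard_ne_zero (by rw [hx]; exact two_ne_zero))
  have hnadj : ¬ G.Adj x y := fun hadj => by
    have hy : y ∈ ({x, y}ᶜ : Set V) := (hN.symm.trans hsides).subset hadj
    exact hy (Or.inr rfl)
  have hxy : IsTwoSeparation G p q {x} {y} := {
    ne := hpq
    nonempty_left := Set.singleton_nonempty x
    nonempty_right := Set.singleton_nonempty y
    disjoint := Set.disjoint_singleton.mpr h.ne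
    union_eq := by rw [hsides, compl_compl, Set.singleton_union]
    not_adj := by simpa using hnadj }
  exact hxy.swap_sides.mem_degreeTwoSet_of_left_singleton hG

lemma ncard_pair_inter_add_ncard_inter_add_ncard_inter
    (h : IsTwoSeparation G x y A B) {S : Set V} (hS : S.Finite) :
    ({x, y} ∩ S).ncard + (A ∩ S).ncard + (B ∩ S).ncard = S.ncard := by
  have hAB : S \ {x, y} = A ∩ S ∪ B ∩ S := by
    rw [← Set.union_inter_distrib_right, h.union_eq, Set.sdiff_eq, Set.inter_comm]
  rw [← Set.ncard_inter_add_ncard_sdiff_eq_ncard S {x, y} hS, hAB,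
    Set.ncard_union_eq (h.disjoint.mono Set.inter_subset_left Set.inter_subset_left)
      (hS.inter_of_right A) (hS.inter_of_right B),
    Set.inter_comm, add_assoc]

lemma isFragment_inter (h : IsTwoSeparation G x y A B) (k : IsTwoSeparation G v w H K) {p q : V}
    (hne : (A ∩ H).Nonempty) (hpq : p ≠ q) (hp : p ∉ A ∩ H) (hq : q ∉ A ∩ H)
    (hout : ∃ z ∉ A ∩ H, z ≠ p ∧ z ≠ q) (hcover : ∀ z, z ∉ B → z ∉ K → z ∈ A ∩ H ∨ z = p ∨ z = q) :
    IsFragment_s7 G (A ∩ H) :=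
  isFragment_of_forall_adj hpq hne hp hq hout fun a ha b hab =>
    hcover b (fun hb => h.not_adj a ha.1 b hb hab) (fun hb => k.not_adj a ha.2 b hb hab)

lemma isFragment_inter_of_notMem_of_notMem (hG : TwoConnected G) (h : IsTwoSeparation G x y A B)
    (k : IsTwoSeparation G v w H K) (hv : v ∈ A) (hx : x ∉ H) (hy : y ∉ H) :
    IsFragment_s7 G (A ∩ H) := by
  obtain ⟨a, haH, hva⟩ := k.exists_adj_left hG
  have haA : a ∈ A := by grind [h.mem_right_iff, h.not_adj v hv a]
  obtain ⟨z, hz⟩ := k.nonempty_right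
  refine h.isFragment_inter k (p := v) (q := w) ⟨a, haA, haH⟩ k.ne ?_ ?_ ⟨z, ?_⟩ ?_ <;>
    grind [h.mem_left_iff, h.mem_right_iff, k.mem_left_iff, k.mem_right_iff]

/-- All neighbours outside `B ∩ H` would equal `x`, making `x` a cut vertex. -/
lemma right_inter_eq_empty (hG : TwoConnected G) (h : IsTwoSeparation G x y A B)
    (k : IsTwoSeparation G v w H K) (hv : v ∈ A) (hw : w ∈ A) (hy : y ∈ K) :
    B ∩ H = ∅ := by
  by_contra! hne
  obtain ⟨a, ⟨haB, haH⟩, b, hb, hbx, hab⟩ := hG.exists_adj_notMem (t := x) (z := y) hne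
    (by grind [h.mem_right_iff]) (by grind [h.mem_right_iff]) h.ne.symm
  have hbA : b ∉ A := fun hbA => h.not_adj b hbA a haB hab.symm
  have hbK : b ∉ K := fun hbK => k.not_adj a haH b hbK hab
  grind [h.mem_left_iff, h.mem_right_iff, k.mem_left_iff, k.mem_right_iff]

lemma notMem_left_of_crossing (hG : TwoConnected G) (h : IsTwoSeparation G x y A B)
    (k : IsTwoSeparation G v w H K) (hv : v ∈ A) (hx : x ∈ H) (hy : y ∈ K) : w ∉ A := by
  intro hw
  have hH := h.right_inter_eq_empty hG k hv hw hy
  have hK := h.swap_pair.right_inter_eq_empty hG k.swap_sides hv hw hx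
  obtain ⟨z, hz⟩ := h.nonempty_right
  have hzH : z ∉ H := fun hzH => hH.subset ⟨hz, hzH⟩
  have hzK : z ∉ K := fun hzK => hK.subset ⟨hz, hzK⟩
  grind [h.mem_right_iff, k.mem_right_iff]

lemma isFragment_inter_of_crossing (hG : TwoConnected G) (h : IsTwoSeparation G x y A B)
    (k : IsTwoSeparation G v w H K) (hv : v ∈ A) (hx : x ∈ H) (hy : y ∈ K)
    (hne : (A ∩ H).Nonempty) : IsFragment_s7 G (A ∩ H) := by
  have hw := h.notMem_left_of_crossing hG k hv hx hy
  refine h.isFragment_inter k (p := v) (q := x) hne ?_ ?_ ?_ ⟨y, ?_⟩ ?_ <;>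
    grind [h.mem_left_iff, h.mem_right_iff, k.mem_left_iff, k.mem_right_iff]

lemma exists_isFragment_of_crossing (hG : TwoConnected G) (h : IsTwoSeparation G x y A B)
    (k : IsTwoSeparation G v w H K) (hv : v ∈ A) (hx : x ∈ H) (hy : y ∈ K) (hA : A.Nontrivial) :
    ∃ F ⊆ A \ {v}, IsFragment_s7 G F := by
  obtain ⟨u, hu, huv⟩ := hA.exists_ne v
  have hw := h.notMem_left_of_crossing hG k hv hx hy
  by_cases huH : u ∈ H
  · exact ⟨A ∩ H, by grind [k.mem_left_iff],
      h.isFragment_inter_of_crossing hG k hv hx hy ⟨u, hu, huH⟩⟩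
  · have huK : u ∈ K := by grind [k.mem_right_iff]
    exact ⟨A ∩ K, by grind [k.mem_right_iff],
      h.swap_pair.isFragment_inter_of_crossing hG k.swap_sides hv hy hx ⟨u, hu, huK⟩⟩

end IsTwoSeparation

namespace CriticallyTwoConnected

lemma exists_isFragment_subset_sdiff_singleton (hG : CriticallyTwoConnected G) {F : Set V}
    (hF : IsFragment_s7 G F) (hF' : F.Nontrivial) {v : V} (hv : v ∈ F) :
    ∃ E ⊆ F \ {v}, IsFragment_s7 G E := by
  obtain ⟨x, y, B, h⟩ := hF
  obtain ⟨w, H, K, k⟩ := hG.exists_isTwoSeparation v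
  by_cases hH : x ∉ H ∧ y ∉ H
  · exact ⟨F ∩ H, by grind [k.mem_left_iff],
      h.isFragment_inter_of_notMem_of_notMem hG.twoConnected k hv hH.1 hH.2⟩
  by_cases hK : x ∉ K ∧ y ∉ K
  · exact ⟨F ∩ K, by grind [k.mem_right_iff],
      h.isFragment_inter_of_notMem_of_notMem hG.twoConnected k.swap_sides hv hK.1 hK.2⟩
  obtain ⟨hx, hy⟩ | ⟨hx, hy⟩ : x ∈ H ∧ y ∈ K ∨ x ∈ K ∧ y ∈ H := by grind [k.mem_right_iff]
  · exact h.exists_isFragment_of_crossing hG.twoConnected k hv hx hy hF'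
  · exact h.exists_isFragment_of_crossing hG.twoConnected k.swap_sides hv hx hy hF'

lemma exists_eq_singleton_of_minimal (hG : CriticallyTwoConnected G) {F : Set V}
    (hF : Minimal (IsFragment_s7 G) F) : ∃ v, F = {v} := by
  obtain ⟨x, y, B, h⟩ := hF.prop
  obtain ⟨v, hv⟩ | hF' := h.nonempty_left.exists_eq_singleton_or_nontrivial
  · exact ⟨v, hv⟩
  · obtain ⟨v, hv⟩ := h.nonempty_left
    obtain ⟨E, hE, hE'⟩ := hG.exists_isFragment_subset_sdiff_singleton hF.prop hF' hv
    have hFE : F ⊆ E := hF.le_of_le hE' (hE.trans Set.sdiff_subset)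
    exact absurd rfl (hE (hFE hv)).2

lemma inter_degreeTwoSet_nonempty (hG : CriticallyTwoConnected G) {F : Set V}
    (hF : IsFragment_s7 G F) (hfin : F.Finite) : (F ∩ degreeTwoSet G).Nonempty := by
  obtain ⟨E, hEF, hE⟩ := hF.exists_minimal_subset hfin
  obtain ⟨v, rfl⟩ := hG.exists_eq_singleton_of_minimal hE
  obtain ⟨x, y, B, h⟩ := hE.prop
  exact ⟨v, hEF rfl, h.mem_degreeTwoSet_of_left_singleton hG.twoConnected⟩

lemma inter_degreeTwoSet_nontrivial (hG : CriticallyTwoConnected G) {F : Set V}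
    (hF : IsFragment_s7 G F) (hF' : F.Nontrivial) (hfin : F.Finite) :
    (F ∩ degreeTwoSet G).Nontrivial := by
  obtain ⟨v, hvF, hv⟩ := hG.inter_degreeTwoSet_nonempty hF hfin
  obtain ⟨E, hE, hE'⟩ := hG.exists_isFragment_subset_sdiff_singleton hF hF' hvF
  obtain ⟨u, huE, hu⟩ := hG.inter_degreeTwoSet_nonempty hE' (hfin.sdiff.subset hE)
  exact ⟨u, ⟨(hE huE).1, hu⟩, v, ⟨hvF, hv⟩, (hE huE).2⟩

lemma four_le_ncard_degreeTwoSet [Finite V] (hG : CriticallyTwoConnected G) :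
    4 ≤ (degreeTwoSet G).ncard := by
  obtain ⟨v⟩ := hG.twoConnected.1.nonempty
  obtain ⟨_, A, B, h⟩ := hG.exists_isTwoSeparation v
  obtain ⟨a, -, ha⟩ := hG.inter_degreeTwoSet_nonempty ⟨_, _, B, h⟩ A.toFinite
  obtain ⟨w, H, K, k⟩ := hG.exists_isTwoSeparation a
  have hH : IsFragment_s7 G H := ⟨a, w, K, k⟩
  have hK : IsFragment_s7 G K := ⟨a, w, H, k.swap_sides⟩
  have hcount := k.ncard_pair_inter_add_ncard_inter_add_ncard_inter (degreeTwoSet G).toFinite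
  have hH_pos := (hG.inter_degreeTwoSet_nonempty hH H.toFinite).ncard_pos
  have hK_pos := (hG.inter_degreeTwoSet_nonempty hK K.toFinite).ncard_pos
  have haw_pos : 0 < (({a, w} : Set V) ∩ degreeTwoSet G).ncard :=
    (Set.ncard_pos).mpr ⟨a, by simp, ha⟩
  obtain ⟨p, rfl⟩ | hH' := k.nonempty_left.exists_eq_singleton_or_nontrivial
  · obtain ⟨q, rfl⟩ | hK' := k.nonempty_right.exists_eq_singleton_or_nontrivial
    · have hw := k.mem_degreeTwoSet_of_singleton_sides hG.twoConnected ha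
      rw [Set.inter_eq_left.mpr (Set.pair_subset ha hw), Set.ncard_pair k.ne] at hcount
      omega
    · have := Set.one_lt_ncard_iff_nontrivial.mpr
        (hG.inter_degreeTwoSet_nontrivial hK hK' K.toFinite)
      omega
  · have := Set.one_lt_ncard_iff_nontrivial.mpr
      (hG.inter_degreeTwoSet_nontrivial hH hH' H.toFinite)
    omega

end CriticallyTwoConnected

end

/-- In a finite simple 2-connected graph `G` on at least 4 vertices, either
some vertex can be subtracted leaving a 2-connected graph, or `G` has at
least four vertices of degree exactly 2. -/
theorem subtractable_or_four_degree_two {V : Type*} [Fintype V]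
    (G : SimpleGraph V)
    (hcard : 4 ≤ Fintype.card V) (hG : TwoConnected G) :
    (∃ v : V, TwoConnected (G.induce ({v}ᶜ : Set V))) ∨
      4 ≤ {v : V | (G.neighborSet v).ncard = 2}.ncard := by
  rw [or_iff_not_imp_left, not_exists]
  intro hsub
  have hcard' : 3 ≤ ENat.card V := by
    rw [ENat.card_eq_coe_fintype_card]
    exact_mod_cast (by lia : 3 ≤ Fintype.card V)
  exact (hG.criticallyTwoConnected hcard' hsub).four_le_ncard_degreeTwoSet
end

section
/- Let G be a finite simple 2-connected graph with at least 3 vertices and let H be a subgraph of G with at least two vertices such that V(G) \ V(H) is non-empty. Then there exist a vertex v ∈ V(G) \ V(H) and two paths γ₁ and γ₂ in G from v to H such that γ₁ and γ₂ share no vertex other than v, and each γᵢ meets V(H) in exactly one vertex (its endpoint other than v). -/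
/-!
Connectedness gives an edge `vw` with `v` outside `H` and `w` in `H`; this edge is the first path.
Deleting `w` leaves a connected graph that still contains a vertex of `H`, so some path from `v`
reaches `H` while avoiding `w`. Stopped at its first vertex in `H`, it is the second path: it meets
the edge `vw` only in `v`.
-/

section

open SimpleGraph

variable {V : Type*} {G : SimpleGraph V} {S : Set V} {u v : V}

theorem exists_adj_notMem_mem_of_preconnected (hG : G.Preconnected) (hS : S.Nonempty)
    (hSc : Sᶜ.Nonempty) : ∃ v ∉ S, ∃ w ∈ S, G.Adj v w := by
  obtain ⟨a, ha⟩ := hSc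
  obtain ⟨b, hb⟩ := hS
  obtain ⟨p⟩ := hG a b
  obtain ⟨d, -, hfst, hsnd⟩ := p.exists_boundary_dart Sᶜ ha (Set.notMem_compl_iff.mpr hb)
  exact ⟨d.fst, hfst, d.snd, Set.notMem_compl_iff.mp hsnd, d.adj⟩

theorem exists_walk_forall_mem_of_reachable_induce {u v : S} (h : (G.induce S).Reachable u v) :
    ∃ p : G.Walk u v, ∀ x ∈ p.support, x ∈ S := by
  obtain ⟨p⟩ := h
  refine ⟨p.map (Embedding.induce S).toHom, fun x hx => ?_⟩
  obtain ⟨y, -, rfl⟩ := List.mem_map.mp (p.support_map (Embedding.induce S).toHom ▸ hx)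
  exact y.2

theorem exists_isPath_support_subset_forall_mem_imp_eq (p : G.Walk u v) (hv : v ∈ S) :
    ∃ w ∈ S, ∃ q : G.Walk u w, q.IsPath ∧ q.support ⊆ p.support ∧
      ∀ x ∈ q.support, x ∈ S → x = w := by
  classical
  obtain ⟨w, hw, hwp, hfirst⟩ :=
    p.exists_mem_support_forall_mem_support_imp_eq {x ∈ p.support.toFinset | x ∈ S}
      ⟨v, by simp [hv]⟩
  have hbypass : (p.takeUntil w hwp).bypass.support ⊆ (p.takeUntil w hwp).support :=
    Walk.support_bypass_subset_support _
  have hsub : (p.takeUntil w hwp).bypass.support ⊆ p.support :=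
    List.Subset.trans hbypass (p.support_takeUntil_subset_support hwp)
  refine ⟨w, (Finset.mem_filter.mp hw).2, _, Walk.bypass_isPath _, hsub, fun x hx hxS => ?_⟩
  have hxp : x ∈ p.support.toFinset := List.mem_toFinset.mpr (hsub hx)
  exact hfirst x (Finset.mem_filter.mpr ⟨hxp, hxS⟩) (hbypass hx)

theorem exists_isPath_forall_mem_of_preconnected_induce {T : Set V}
    (hT : (G.induce T).Preconnected) (hv : v ∈ T) (hST : (S ∩ T).Nonempty) :
    ∃ w ∈ S, ∃ p : G.Walk v w, p.IsPath ∧ (∀ x ∈ p.support, x ∈ T) ∧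
      ∀ x ∈ p.support, x ∈ S → x = w := by
  obtain ⟨s, hsS, hsT⟩ := hST
  obtain ⟨p, hpT⟩ := exists_walk_forall_mem_of_reachable_induce (hT ⟨v, hv⟩ ⟨s, hsT⟩)
  obtain ⟨w, hw, q, hq, hqp, hqS⟩ := exists_isPath_support_subset_forall_mem_imp_eq p hsS
  exact ⟨w, hw, q, hq, fun x hx => hpT x (hqp hx), hqS⟩

theorem exists_two_disjoint_paths_to_subgraph_general (hG : TwoConnected G)
    (hS : S.Nontrivial) (hSc : Sᶜ.Nonempty) :
    ∃ v : V, v ∉ S ∧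
      ∃ (w₁ w₂ : V), w₁ ∈ S ∧ w₂ ∈ S ∧
        ∃ (γ₁ : G.Walk v w₁) (γ₂ : G.Walk v w₂),
          γ₁.IsPath ∧ γ₂.IsPath ∧
          (∀ x, x ∈ γ₁.support → x ∈ γ₂.support → x = v) ∧
          (∀ x ∈ γ₁.support, x ∈ S → x = w₁) ∧
          (∀ x ∈ γ₂.support, x ∈ S → x = w₂) := by
  obtain ⟨v, hv, w, hw, hvw⟩ :=
    exists_adj_notMem_mem_of_preconnected hG.1.preconnected hS.nonempty hSc
  obtain ⟨t, ht, γ, hγ, hγw, hγS⟩ :=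
    exists_isPath_forall_mem_of_preconnected_induce (hG.2 w).preconnected hvw.ne (hS.exists_ne w)
  have hedge : ∀ x ∈ hvw.toWalk.support, x = v ∨ x = w := by simp
  refine ⟨v, hv, w, t, hw, ht, hvw.toWalk, γ, hvw.isPath_toWalk, hγ, ?_, ?_, hγS⟩
  · exact fun x hx hxγ => (hedge x hx).resolve_right (hγw x hxγ)
  · exact fun x hx hxS => (hedge x hx).resolve_left fun h => hv (h ▸ hxS)

end

/-- If `G` is a finite simple 2-connected graph on at least 3 vertices and
`H` is a vertex-proper subgraph of `G` with at least two vertices, then there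
is a vertex `v` outside `H` and two paths `γ₁`, `γ₂` in `G` from `v` to `H`
sharing no vertex other than `v`, each meeting `H` only in its endpoint. -/
theorem exists_two_disjoint_paths_to_subgraph {V : Type*} [Fintype V]
    (G : SimpleGraph V) (H : G.Subgraph)
    (hcard : 3 ≤ Fintype.card V) (hG : TwoConnected G)
    (hH : 2 ≤ H.verts.ncard) (hproper : (H.vertsᶜ : Set V).Nonempty) :
    ∃ v : V, v ∉ H.verts ∧
      ∃ (w₁ w₂ : V), w₁ ∈ H.verts ∧ w₂ ∈ H.verts ∧
        ∃ (γ₁ : G.Walk v w₁) (γ₂ : G.Walk v w₂),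
          γ₁.IsPath ∧ γ₂.IsPath ∧
          (∀ x, x ∈ γ₁.support → x ∈ γ₂.support → x = v) ∧
          (∀ x ∈ γ₁.support, x ∈ H.verts → x = w₁) ∧
          (∀ x ∈ γ₂.support, x ∈ H.verts → x = w₂) :=
  exists_two_disjoint_paths_to_subgraph_general hG
    (Set.one_lt_ncard_iff_nontrivial.mp hH) hproper
end

section
/- Let G be a finite simple 2-connected graph with at least 3 vertices. Then either G has a vertex of degree exactly 2, or there exists an edge e of G such that the graph G − e obtained by deleting e (keeping all vertices) is 2-connected. -/
/-!
Fix a cycle none of whose edges can be deleted. Deleting an edge `xy` of it creates a cut vertex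
`v`, so the vertices other than `v` fall into two sides `A ∋ x` and `B ∋ y` with `xy` the only edge
between them. Let `xz` be the other cycle edge at `x`, with sides `C ∋ x`, `D ∋ z` and cut vertex
`w`. Since no vertex of `G` is a cut vertex, these two separations cross in only two ways:
* if `w ∈ B` or `v ∈ D`, then both hold, `A ∩ C = {x}`, and `y`, `z` are the only neighbours of `x`;
* otherwise `B ∩ D = ∅`, and `D ⊆ A \ {x}`, so the separation for `zx` has fewer cycle vertices on
  its first side than the one for `xy`.
As the cycle is finite, some vertex on it has degree 2.
-/

section

variable {V : Type*} {G : SimpleGraph V} {A B C D : Set V} {v w x y z : V}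

lemma exists_adj_of_preconnected_induce {U S : Set V} (hU : (G.induce U).Preconnected)
    (hxU : x ∈ U) (hxS : x ∈ S) (hyU : y ∈ U) (hyS : y ∉ S) :
    ∃ a ∈ S, ∃ b ∉ S, a ∈ U ∧ b ∈ U ∧ G.Adj a b := by
  obtain ⟨p⟩ := hU ⟨x, hxU⟩ ⟨y, hyU⟩
  obtain ⟨d, -, hfst, hsnd⟩ := p.exists_boundary_dart (Subtype.val ⁻¹' S) hxS hyS
  exact ⟨d.fst, hfst, d.snd, hsnd, d.fst.2, d.snd.2, d.adj⟩

lemma exists_ne_mem_edges_of_isCycle {u : V} {c : G.Walk u u} (hc : c.IsCycle)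
    (hxy : s(x, y) ∈ c.edges) : ∃ z, y ≠ z ∧ s(x, z) ∈ c.edges := by
  simp only [← SimpleGraph.Walk.adj_toSubgraph_iff_mem_edges] at hxy ⊢
  exact hc.isCycles_spanningCoe_toSubgraph.other_adj_of_adj hxy

/-- A mixed separation of order two, consisting of a vertex `v` and an edge `xy`: the vertices other
than `v` are divided into two sides `A ∋ x` and `B ∋ y`, and `xy` is the only edge between them. It
witnesses that `v` becomes a cut vertex when `xy` is deleted. The sides are ordered, `x` being the
end of the edge in the first one. -/
structure IsMixedSeparation (G : SimpleGraph V) (A B : Set V) (v x y : V) : Prop where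
  left_mem : x ∈ A
  right_mem : y ∈ B
  disjoint : Disjoint A B
  union_eq : A ∪ B = {v}ᶜ
  adj : G.Adj x y
  eq_and_eq_of_adj : ∀ a ∈ A, ∀ b ∈ B, G.Adj a b → a = x ∧ b = y

namespace IsMixedSeparation

protected lemma symm (h : IsMixedSeparation G A B v x y) : IsMixedSeparation G B A v y x where
  left_mem := h.right_mem
  right_mem := h.left_mem
  disjoint := h.disjoint.symm
  union_eq := Set.union_comm A B ▸ h.union_eq
  adj := h.adj.symm
  eq_and_eq_of_adj b hb a ha hab := (h.eq_and_eq_of_adj a ha b hb hab.symm).symm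

lemma ne_cut_of_mem_left (h : IsMixedSeparation G A B v x y) {a : V} (ha : a ∈ A) : a ≠ v :=
  h.union_eq.subset (.inl ha)

lemma eq_cut_or_mem_right (h : IsMixedSeparation G A B v x y) {a : V} (ha : a ∉ A) :
    a = v ∨ a ∈ B :=
  or_iff_not_imp_left.2 fun hav => (h.union_eq.superset hav).resolve_left ha

lemma cut_mem_right_of_cut_mem_right (hG : TwoConnected G) (h : IsMixedSeparation G A B v x y)
    (k : IsMixedSeparation G C D w x z) (hyz : y ≠ z) (hwB : w ∈ B) : v ∈ D := by
  by_contra hvD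
  have hzB : z ∉ B := fun hzB => hyz (h.eq_and_eq_of_adj x h.left_mem z hzB k.adj).2.symm
  have hzv : z ≠ v := fun hzv => hvD (hzv ▸ k.right_mem)
  have hzA : z ∈ A := (h.symm.eq_cut_or_mem_right hzB).resolve_left hzv
  -- An edge leaving `A ∩ D` ends at `x`, so `x` would separate `z` from `y`.
  obtain ⟨a, ⟨haA, haD⟩, b, hb, hax, hbx, hab⟩ := exists_adj_of_preconnected_induce
    (hG.2 x).preconnected k.adj.ne' (S := A ∩ D) ⟨hzA, k.right_mem⟩ h.adj.ne'
    fun hy => h.disjoint.notMem_of_mem_right h.right_mem hy.1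
  have hbB : b ∉ B := fun hbB => hax (h.eq_and_eq_of_adj a haA b hbB hab).1
  have hbC : b ∉ C := fun hbC => hbx (k.eq_and_eq_of_adj b hbC a haD hab.symm).1
  obtain rfl | hbD := k.eq_cut_or_mem_right hbC
  · exact hbB hwB
  · obtain rfl | hbA := h.symm.eq_cut_or_mem_right hbB
    · exact hvD hbD
    · exact hb ⟨hbA, hbD⟩

lemma neighborSet_eq_pair (hG : TwoConnected G) (h : IsMixedSeparation G A B v x y)
    (k : IsMixedSeparation G C D w x z) (hwB : w ∈ B) (hvD : v ∈ D) :
    G.neighborSet x = {y, z} := by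
  have hAC : ∀ a ∈ A, a ∈ C → a = x := by
    intro s hsA hsC
    by_contra hsx
    obtain ⟨a, ⟨haA, haC⟩, b, hb, hax, -, hab⟩ := exists_adj_of_preconnected_induce
      (hG.2 x).preconnected hsx (S := A ∩ C) ⟨hsA, hsC⟩ h.adj.ne'
      fun hy => h.disjoint.notMem_of_mem_right h.right_mem hy.1
    have hbB : b ∉ B := fun hbB => hax (h.eq_and_eq_of_adj a haA b hbB hab).1
    have hbD : b ∉ D := fun hbD => hax (k.eq_and_eq_of_adj a haC b hbD hab).1
    obtain rfl | hbA := h.symm.eq_cut_or_mem_right hbB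
    · exact hbD hvD
    obtain rfl | hbC := k.symm.eq_cut_or_mem_right hbD
    · exact hbB hwB
    exact hb ⟨hbA, hbC⟩
  refine Set.Subset.antisymm (fun b (hxb : G.Adj x b) => ?_)
    (Set.pair_subset h.adj k.adj)
  by_cases hbB : b ∈ B
  · exact .inl (h.eq_and_eq_of_adj x h.left_mem b hbB hxb).2
  by_cases hbD : b ∈ D
  · exact .inr (k.eq_and_eq_of_adj x k.left_mem b hbD hxb).2
  obtain rfl | hbA := h.symm.eq_cut_or_mem_right hbB
  · exact absurd hvD hbD
  obtain rfl | hbC := k.symm.eq_cut_or_mem_right hbD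
  · exact absurd hwB hbB
  exact absurd (hAC b hbA hbC) hxb.ne'

lemma right_subset_left (hG : TwoConnected G) (h : IsMixedSeparation G A B v x y)
    (k : IsMixedSeparation G C D w x z) (hyz : y ≠ z) (hwB : w ∉ B) (hvD : v ∉ D) : D ⊆ A := by
  have hBD : ∀ b ∈ B, b ∉ D := by
    intro s hsB hsD
    -- An edge leaving `B ∩ D` ends at `v`, so `v` would separate `s` from `x`.
    obtain ⟨a, ⟨haB, haD⟩, b, hb, -, hbv, hab⟩ := exists_adj_of_preconnected_induce
      (hG.2 v).preconnected (h.symm.ne_cut_of_mem_left hsB) (S := B ∩ D) ⟨hsB, hsD⟩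
      (h.ne_cut_of_mem_left h.left_mem) fun hx => h.disjoint.notMem_of_mem_left h.left_mem hx.1
    have hbx : b ≠ x := by
      rintro rfl
      exact hyz ((h.eq_and_eq_of_adj b h.left_mem a haB hab.symm).2.symm.trans
        (k.eq_and_eq_of_adj b k.left_mem a haD hab.symm).2)
    have hbB : b ∈ B := (h.eq_cut_or_mem_right fun hbA =>
      hbx (h.eq_and_eq_of_adj b hbA a haB hab.symm).1).resolve_left hbv
    have hbw : b ≠ w := fun hbw => hwB (hbw ▸ hbB)
    have hbD : b ∈ D := (k.eq_cut_or_mem_right fun hbC =>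
      hbx (k.eq_and_eq_of_adj b hbC a haD hab.symm).1).resolve_left hbw
    exact hb ⟨hbB, hbD⟩
  intro d hd
  have hdv : d ≠ v := fun hdv => hvD (hdv ▸ hd)
  exact (h.symm.eq_cut_or_mem_right fun hdB => hBD d hdB hd).resolve_left hdv

theorem neighborSet_eq_pair_or_right_subset_left (hG : TwoConnected G)
    (h : IsMixedSeparation G A B v x y) (k : IsMixedSeparation G C D w x z) (hyz : y ≠ z) :
    G.neighborSet x = {y, z} ∨ D ⊆ A := by
  have hcross : w ∈ B ↔ v ∈ D :=
    ⟨cut_mem_right_of_cut_mem_right hG h k hyz, cut_mem_right_of_cut_mem_right hG k h hyz.symm⟩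
  by_cases hwB : w ∈ B
  · exact .inl (neighborSet_eq_pair hG h k hwB (hcross.1 hwB))
  · exact .inr (right_subset_left hG h k hyz hwB (mt hcross.2 hwB))

end IsMixedSeparation

lemma exists_isMixedSeparation_of_not_preconnected_induce
    (hG : (G.induce {v}ᶜ).Preconnected)
    (hdel : ¬ ((G.deleteEdges {s(x, y)}).induce {v}ᶜ).Preconnected) :
    ∃ A B, IsMixedSeparation G A B v x y := by
  simp only [SimpleGraph.Preconnected, not_forall] at hdel
  obtain ⟨p, q, hpq⟩ := hdel
  let S : Set V :=
    {u | ∃ hu : u ∈ ({v}ᶜ : Set V),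
      ((G.deleteEdges {s(x, y)}).induce {v}ᶜ).Reachable p ⟨u, hu⟩}
  have eq_of_adj : ∀ a ∈ S, ∀ b ∈ {v}ᶜ \ S, G.Adj a b → s(a, b) = s(x, y) := by
    rintro a ⟨hav, hpa⟩ b ⟨hbv, hbS⟩ hab
    by_contra hne
    have hab' : ((G.deleteEdges {s(x, y)}).induce {v}ᶜ).Adj ⟨a, hav⟩ ⟨b, hbv⟩ :=
      SimpleGraph.deleteEdges_adj.2 ⟨hab, hne⟩
    exact hbS ⟨hbv, hpa.trans hab'.reachable⟩
  obtain ⟨a, haS, b, hbS, -, hbv, hab⟩ := exists_adj_of_preconnected_induce (S := S) hG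
    p.2 ⟨p.2, .rfl⟩ q.2 fun ⟨_, hq⟩ => hpq hq
  have hsep : IsMixedSeparation G S ({v}ᶜ \ S) v a b :=
    { left_mem := haS
      right_mem := ⟨hbv, hbS⟩
      disjoint := Set.disjoint_sdiff_right
      union_eq := Set.union_sdiff_cancel fun _ hu => hu.1
      adj := hab
      eq_and_eq_of_adj := fun a' ha' b' hb' hab' => by
        have heq := (eq_of_adj a' ha' b' hb' hab').trans (eq_of_adj a haS b ⟨hbv, hbS⟩ hab).symm
        exact (Sym2.eq_iff.1 heq).resolve_right fun hswap => hbS (hswap.1 ▸ ha') }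
  obtain ⟨rfl, rfl⟩ | ⟨rfl, rfl⟩ := Sym2.eq_iff.1 (eq_of_adj a haS b ⟨hbv, hbS⟩ hab)
  · exact ⟨_, _, hsep⟩
  · exact ⟨_, _, hsep.symm⟩

namespace TwoConnected

lemma exists_isMixedSeparation (hG : TwoConnected G) (hxy : ¬ G.IsBridge s(x, y))
    (hdel : ¬ TwoConnected (G.deleteEdges {s(x, y)})) :
    ∃ A B v, IsMixedSeparation G A B v x y := by
  have hconn := hG.1.connected_delete_edge_of_not_isBridge hxy
  obtain ⟨v, hv⟩ : ∃ v, ¬ ((G.deleteEdges {s(x, y)}).induce {v}ᶜ).Connected :=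
    not_forall.1 fun h => hdel ⟨hconn, h⟩
  have hpre : ¬ ((G.deleteEdges {s(x, y)}).induce {v}ᶜ).Preconnected :=
    fun h => hv { preconnected := h, nonempty := (hG.2 v).nonempty }
  obtain ⟨A, B, hAB⟩ :=
    exists_isMixedSeparation_of_not_preconnected_induce (hG.2 v).preconnected hpre
  exact ⟨A, B, v, hAB⟩

theorem degreeTwo_or_removable_edge_of_isCycle (hG : TwoConnected G) {u : V} {c : G.Walk u u}
    (hc : c.IsCycle) :
    (∃ v ∈ c.support, (G.neighborSet v).ncard = 2) ∨
      ∃ e ∈ c.edges, TwoConnected (G.deleteEdges {e}) := by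
  by_contra! hcon
  obtain ⟨hdeg, hdel⟩ := hcon
  have exists_sep : ∀ x y, s(x, y) ∈ c.edges → ∃ A B v, IsMixedSeparation G A B v x y :=
    fun x y hxy => hG.exists_isMixedSeparation (fun hb => hb.notMem_edges_of_isCycle hc hxy)
      (hdel _ hxy)
  have descent : ∀ (n : ℕ) (x y : V) (A B : Set V) (v : V), s(x, y) ∈ c.edges →
      IsMixedSeparation G A B v x y → (A ∩ {a | a ∈ c.support}).ncard ≠ n := by
    intro n
    induction n using Nat.strong_induction_on with
    | _ n ih =>
      rintro x y A B v hxy h rfl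
      obtain ⟨z, hyz, hxz⟩ := exists_ne_mem_edges_of_isCycle hc hxy
      obtain ⟨C, D, w, k⟩ := exists_sep x z hxz
      have hx : x ∈ c.support := c.fst_mem_support_of_mem_edges hxy
      obtain hN | hDA := h.neighborSet_eq_pair_or_right_subset_left hG k hyz
      · exact hdeg x hx (hN ▸ Set.ncard_pair hyz)
      · have hxD : x ∉ D := k.disjoint.notMem_of_mem_left k.left_mem
        have hlt : D ∩ {a | a ∈ c.support} ⊂ A ∩ {a | a ∈ c.support} :=
          (Set.ssubset_iff_of_subset (Set.inter_subset_inter_left _ hDA)).2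
            ⟨x, ⟨h.left_mem, hx⟩, fun hx => hxD hx.1⟩
        exact ih _ (Set.ncard_lt_ncard hlt (c.support.finite_toSet.inter_of_right A))
          z x D C w (Sym2.eq_swap ▸ hxz) k.symm rfl
  obtain ⟨⟨x, y⟩, hxy⟩ := List.exists_mem_of_ne_nil c.edges
    (mt SimpleGraph.Walk.edges_eq_nil.1 hc.not_nil)
  obtain ⟨A, B, v, h⟩ := exists_sep x y hxy
  exact descent _ x y A B v hxy h rfl

lemma not_isBridge (hG : TwoConnected G) (hcard : 3 ≤ ENat.card V) (hxy : x ≠ y) :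
    ¬ G.IsBridge s(x, y) := by
  rw [SimpleGraph.isBridge_iff, not_not]
  by_contra hy
  let S : Set V := {u | (G.deleteEdges {s(x, y)}).Reachable x u}
  have eq_of_adj : ∀ a ∈ S, ∀ b ∉ S, G.Adj a b → s(a, b) = s(x, y) := fun a ha b hb hab =>
    by_contra fun hne => hb (ha.trans (SimpleGraph.deleteEdges_adj.2 ⟨hab, hne⟩).reachable)
  obtain ⟨z, hzx, hzy⟩ := ENat.exists_ne_ne_of_three_le hcard x y
  by_cases hz : z ∈ S
  · obtain ⟨a, ha, b, hb, hax, hbx, hab⟩ := exists_adj_of_preconnected_induce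
      (hG.2 x).preconnected hzx hz hxy.symm hy
    exact (Sym2.eq_iff.1 (eq_of_adj a ha b hb hab)).elim (hax ·.1) (hbx ·.2)
  · obtain ⟨a, ha, b, hb, hay, hby, hab⟩ := exists_adj_of_preconnected_induce (S := S)
      (hG.2 y).preconnected hxy .rfl hzy hz
    exact (Sym2.eq_iff.1 (eq_of_adj a ha b hb hab)).elim (hby ·.2) (hay ·.1)

lemma exists_isCycle (hG : TwoConnected G) (hcard : 3 ≤ ENat.card V) :
    ∃ (u : V) (c : G.Walk u u), c.IsCycle := by
  have : Nontrivial V := (ENat.one_lt_card_iff_nontrivial V).1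
    (lt_of_lt_of_le (by norm_num) hcard)
  obtain ⟨x⟩ := hG.1.nonempty
  obtain ⟨y, hxy⟩ := hG.1.preconnected.exists_adj_of_nontrivial x
  obtain ⟨u, c, hc, -⟩ := SimpleGraph.adj_and_reachable_delete_edges_iff_exists_cycle.1
    ⟨hxy, not_not.1 (hG.not_isBridge hcard hxy.ne)⟩
  exact ⟨u, c, hc⟩

end TwoConnected

theorem degreeTwo_or_removable_edge_general (hcard : 3 ≤ ENat.card V) (hG : TwoConnected G) :
    (∃ v : V, (G.neighborSet v).ncard = 2) ∨
      ∃ e ∈ G.edgeSet, TwoConnected (G.deleteEdges {e}) := by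
  obtain ⟨u, c, hc⟩ := hG.exists_isCycle hcard
  exact (hG.degreeTwo_or_removable_edge_of_isCycle hc).imp (fun ⟨v, _, hv⟩ => ⟨v, hv⟩)
    fun ⟨e, he, hdel⟩ => ⟨e, c.edges_subset_edgeSet he, hdel⟩

end

/-- Every finite simple 2-connected graph on at least 3 vertices either has a
vertex of degree exactly 2, or has an edge whose deletion (keeping all
vertices) leaves a 2-connected graph. -/
theorem degreeTwo_or_removable_edge {V : Type*} [Fintype V]
    (G : SimpleGraph V)
    (hcard : 3 ≤ Fintype.card V) (hG : TwoConnected G) :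
    (∃ v : V, (G.neighborSet v).ncard = 2) ∨
      ∃ e ∈ G.edgeSet, TwoConnected (G.deleteEdges {e}) :=
  degreeTwo_or_removable_edge_general (by simpa using hcard) hG
end

section
/- For every natural number N there exists a finite simple 2-connected graph G with more than N vertices such that exactly four vertices of G have degree 2 and, for every vertex v of G, the induced subgraph of G on V(G) \ {v} is not 2-connected. -/
open SimpleGraph

section

variable {V W : Type*} {G : SimpleGraph V} {H : SimpleGraph W}

lemma reachable_map_of_adj_reachable (f : V → W)
    (hf : ∀ u v, G.Adj u v → H.Reachable (f u) (f v)) {u v : V} (h : G.Reachable u v) :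
    H.Reachable (f u) (f v) := by
  simp only [reachable_iff_reflTransGen] at hf h ⊢
  exact h.lift' f hf

lemma twoConnected_boxProd [Nontrivial V] [Nontrivial W] (hG : G.Connected) (hH : H.Connected) :
    TwoConnected (G □ H) := by
  refine ⟨hG.boxProd hH, fun ⟨a, b⟩ ↦ ?_⟩
  obtain ⟨a', ha'⟩ := exists_ne a
  obtain ⟨b', hb'⟩ := exists_ne b
  have row (y : W) (hy : y ≠ b) (x x' : V) : ((G □ H).induce {(a, b)}ᶜ).Reachable
      ⟨(x, y), by simp [hy]⟩ ⟨(x', y), by simp [hy]⟩ :=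
    let f : G →g (G □ H).induce {(a, b)}ᶜ := ⟨fun z ↦ ⟨(z, y), by simp [hy]⟩, boxProd_adj_left.2⟩
    (hG x x').map f
  have column (x : V) (hx : x ≠ a) (y y' : W) : ((G □ H).induce {(a, b)}ᶜ).Reachable
      ⟨(x, y), by simp [hx]⟩ ⟨(x, y'), by simp [hx]⟩ :=
    let f : H →g (G □ H).induce {(a, b)}ᶜ := ⟨fun z ↦ ⟨(x, z), by simp [hx]⟩, boxProd_adj_right.2⟩
    (hH y y').map f
  refine (connected_iff_exists_forall_reachable _).2 ⟨⟨(a', b'), by simp [ha']⟩, ?_⟩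
  rintro ⟨⟨x, y⟩, hxy⟩
  by_cases hy : y = b
  · have hx : x ≠ a := fun hx ↦ hxy (Prod.ext hx hy)
    exact (row b' hb' a' x).trans (column x hx b' y)
  · exact (column a' ha' b' y).trans (row y hy a' x)

lemma TwoConnected.connected_induce_compl_pair {v w : V}
    (h : TwoConnected (G.induce ({v}ᶜ : Set V))) (hwv : w ≠ v) :
    (G.induce ({v, w}ᶜ : Set V)).Connected := by
  let f : (G.induce ({v}ᶜ : Set V)).induce {⟨w, hwv⟩}ᶜ →g G.induce ({v, w}ᶜ : Set V) :=
    { toFun x := ⟨x.1.1, by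
        rintro (hv | hw)
        exacts [x.1.2 hv, x.2 (Subtype.ext hw)]⟩
      map_rel' := id }
  refine (h.2 ⟨w, hwv⟩).map f fun ⟨x, hx⟩ ↦ ?_
  rw [Set.mem_compl_iff, Set.mem_insert_iff, Set.mem_singleton_iff, not_or] at hx
  exact ⟨⟨⟨x, hx.1⟩, fun h ↦ hx.2 (congrArg Subtype.val h)⟩, rfl⟩

end

section Prism

variable {V : Type*} {G : SimpleGraph V}

/-- The prism over `G`: two copies of `G`, indexed by `Bool`, with corresponding vertices joined. -/
abbrev prism (G : SimpleGraph V) : SimpleGraph (V × Bool) :=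
  G □ (⊤ : SimpleGraph Bool)

lemma ncard_neighborSet_prism (x : V × Bool) [Finite (G.neighborSet x.1)] :
    ((prism G).neighborSet x).ncard = (G.neighborSet x.1).ncard + 1 := by
  have := Fintype.ofFinite (G.neighborSet x.1)
  simp only [Set.ncard_eq_toFinset_card', Set.toFinset_card, card_neighborSet_eq_degree,
    degree_boxProd, IsRegularOfDegree.top.degree_eq, Fintype.card_bool, Nat.add_one_sub_one]

lemma ncard_setOf_ncard_neighborSet_prism [∀ a, Finite (G.neighborSet a)] (k : ℕ) :
    {x | ((prism G).neighborSet x).ncard = k + 1}.ncard =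
      {a | (G.neighborSet a).ncard = k}.ncard * 2 := by
  have prod_eq : {x | ((prism G).neighborSet x).ncard = k + 1} =
      {a | (G.neighborSet a).ncard = k} ×ˢ (Set.univ : Set Bool) := by
    ext x
    simp [ncard_neighborSet_prism]
  rw [prod_eq, Set.ncard_prod, Set.ncard_univ, Nat.card_eq_fintype_card, Fintype.card_bool]

lemma connected_induce_compl_of_twoConnected_prism_induce_compl {a : V} {b : Bool}
    (h : TwoConnected ((prism G).induce ({(a, b)}ᶜ : Set (V × Bool)))) :
    (G.induce ({a}ᶜ : Set V)).Connected := by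
  have rung_eq : ({(a, b), (a, !b)} : Set (V × Bool)) = Prod.fst ⁻¹' {a} := by
    ext ⟨x, d⟩
    cases b <;> cases d <;> simp
  have hconn : ((prism G).induce (Prod.fst ⁻¹' {a})ᶜ).Connected :=
    rung_eq ▸ h.connected_induce_compl_pair (by simp)
  let proj (x : ((Prod.fst ⁻¹' {a})ᶜ : Set (V × Bool))) : ({a}ᶜ : Set V) := ⟨x.1.1, x.2⟩
  have : Nonempty ({a}ᶜ : Set V) := hconn.nonempty.map proj
  refine ⟨fun x y ↦ reachable_map_of_adj_reachable proj ?_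
    (hconn.preconnected ⟨(x, b), x.2⟩ ⟨(y, b), y.2⟩)⟩
  rintro u v (⟨hadj, -⟩ | ⟨-, hfst⟩)
  · exact Adj.reachable hadj
  · have hproj : proj u = proj v := Subtype.ext hfst
    rw [hproj]

lemma not_twoConnected_prism_induce_compl_of_leaf {a c : V} (ha : G.neighborSet a = {c})
    (b : Bool) : ¬ TwoConnected ((prism G).induce ({(a, b)}ᶜ : Set (V × Bool))) := by
  intro h
  have hac : a ≠ c := G.ne_of_adj (ha.superset rfl : c ∈ G.neighborSet a)
  have hconn : ((prism G).induce ({(a, b), (c, !b)}ᶜ : Set (V × Bool))).Connected :=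
    h.connected_induce_compl_pair (by simp)
  let p : ({(a, b), (c, !b)}ᶜ : Set (V × Bool)) := ⟨(a, !b), by simp [hac]⟩
  let q : ({(a, b), (c, !b)}ᶜ : Set (V × Bool)) := ⟨(c, b), by simp [hac.symm]⟩
  have : Nontrivial ({(a, b), (c, !b)}ᶜ : Set (V × Bool)) :=
    ⟨p, q, fun hpq ↦ hac (congrArg (fun x ↦ x.1.1) hpq)⟩
  obtain ⟨⟨⟨x, d⟩, hxd⟩, ⟨hadj, hd⟩ | ⟨hd, hx⟩⟩ :=
    hconn.preconnected.exists_adj_of_nontrivial p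
  · have hx : x = c := ha.subset hadj
    exact hxd (Or.inr (Prod.ext hx hd.symm))
  · exact hxd (Or.inl (Prod.ext hx.symm (Bool.not_eq_not.1 hd.symm)))

end Prism

lemma not_connected_pathGraph_induce_compl {n : ℕ} {i : Fin (n + 1)} (h_zero : i ≠ 0)
    (h_last : i ≠ Fin.last n) :
    ¬ ((pathGraph (n + 1)).induce ({i}ᶜ : Set (Fin (n + 1)))).Connected := by
  intro h
  have same_side : (⊥ : SimpleGraph Prop).Reachable (0 < i) (Fin.last n < i) := by
    refine reachable_map_of_adj_reachable (fun j : ({i}ᶜ : Set (Fin (n + 1))) ↦ j.1 < i) ?_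
      (h.preconnected ⟨0, h_zero.symm⟩ ⟨Fin.last n, h_last.symm⟩)
    rintro ⟨j, hj⟩ ⟨k, hk⟩ hjk
    have hjk : j.val + 1 = k.val ∨ k.val + 1 = j.val := pathGraph_adj.1 hjk
    simp only [Set.mem_compl_iff, Set.mem_singleton_iff, Fin.ext_iff] at hj hk
    simp only [reachable_bot, eq_iff_iff, Fin.lt_def]
    omega
  rw [reachable_bot] at same_side
  exact (Fin.le_last i).not_gt (same_side ▸ Fin.pos_iff_ne_zero.2 h_zero)

lemma neighborSet_pathGraph_zero (n : ℕ) : (pathGraph (n + 2)).neighborSet 0 = {1} := by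
  ext i
  simp only [mem_neighborSet, pathGraph_adj, Set.mem_singleton_iff, Fin.ext_iff, Fin.val_zero,
    Fin.val_one]
  omega

lemma neighborSet_pathGraph_last (n : ℕ) :
    (pathGraph (n + 2)).neighborSet (Fin.last (n + 1)) = {(Fin.last n).castSucc} := by
  ext i
  simp only [mem_neighborSet, pathGraph_adj, Set.mem_singleton_iff, Fin.ext_iff, Fin.val_last,
    Fin.val_castSucc]
  omega

lemma setOf_ncard_neighborSet_pathGraph_eq_one (n : ℕ) :
    {i | ((pathGraph (n + 2)).neighborSet i).ncard = 1} = {0, Fin.last (n + 1)} := by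
  classical
  ext i
  constructor
  · intro hi
    by_contra hends
    rw [Set.mem_insert_iff, Set.mem_singleton_iff, not_or] at hends
    refine not_connected_pathGraph_induce_compl hends.1 hends.2
      ((pathGraph_connected _).induce_compl_singleton_of_degree_eq_one ?_)
    rwa [← card_neighborSet_eq_degree, ← Set.toFinset_card, ← Set.ncard_eq_toFinset_card']
  · rintro (rfl | rfl)
    · simp [neighborSet_pathGraph_zero]
    · simp [neighborSet_pathGraph_last]

lemma not_twoConnected_prism_pathGraph_induce_compl {n : ℕ} (v : Fin (n + 2) × Bool) :
    ¬ TwoConnected ((prism (pathGraph (n + 2))).induce ({v}ᶜ : Set (Fin (n + 2) × Bool))) := by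
  obtain ⟨i, b⟩ := v
  by_cases h_zero : i = 0
  · exact not_twoConnected_prism_induce_compl_of_leaf (h_zero ▸ neighborSet_pathGraph_zero n) b
  by_cases h_last : i = Fin.last (n + 1)
  · exact not_twoConnected_prism_induce_compl_of_leaf (h_last ▸ neighborSet_pathGraph_last n) b
  exact fun h ↦ not_connected_pathGraph_induce_compl h_zero h_last
    (connected_induce_compl_of_twoConnected_prism_induce_compl h)

/-- For every `N` there is a finite simple 2-connected graph with more than
`N` vertices, exactly four vertices of degree 2, in which every vertex is
inessential: subtracting any vertex destroys 2-connectedness. -/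
theorem exists_large_all_inessential (N : ℕ) :
    ∃ (V : Type) (_ : Finite V) (G : SimpleGraph V),
      N < Nat.card V ∧ TwoConnected G ∧
      {v : V | (G.neighborSet v).ncard = 2}.ncard = 4 ∧
      ∀ v : V, ¬ TwoConnected (G.induce ({v}ᶜ : Set V)) := by
  refine ⟨Fin (N + 2) × Bool, inferInstance, prism (pathGraph (N + 2)), ?_, ?_, ?_,
    not_twoConnected_prism_pathGraph_induce_compl⟩
  · rw [Nat.card_prod, Nat.card_fin, Nat.card_eq_fintype_card, Fintype.card_bool]
    omega
  · exact twoConnected_boxProd (pathGraph_connected _) connected_top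
  · rw [ncard_setOf_ncard_neighborSet_prism, setOf_ncard_neighborSet_pathGraph_eq_one,
      Set.ncard_pair (Fin.last_pos).ne]
end
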